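/- arXiv:1805.03624 — 4 statements merged into one kernel-verified Lean document; each statement's English description precedes it below -/
import Mathlib

section
/- Suppose a_{n+k} = a_n for all n ∈ ℕ (α is purely periodic with period k ≥ 1). Then there exist rational numbers μ, μ', ν, ν' such that for all n ∈ ℕ, p_n = μ q_n + μ' q_{n+k} and q_n = ν p_n + ν' p_{n+k}. -/
/-!
Periodicity of the partial quotients makes `n ↦ p_{n+k}` and `n ↦ q_{n+k}` solutions of the
second-order recurrence satisfied by `p` and `q`, hence linear combinations of them:
`p_{n+k} = p_{k-1} p_n + p_{k-2} q_n` and `q_{n+k} = q_{k-1} p_n + q_{k-2} q_n`.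
The second identity can be solved for `p_n` and the first for `q_n`, because positivity of the
partial quotients gives `q_{k-1} ≠ 0` and `p_{k-2} ≠ 0`.
-/

/-- `a` is the sequence of partial quotients of the continued fraction expansion
`[a 0; a 1, a 2, …]` of `α`: there is a sequence `θ` of complete quotients with
`θ 0 = α`, `a n = ⌊θ n⌋` and `θ (n+1) = 1/(θ n - ⌊θ n⌋)`. -/
def IsCFExpansion (α : ℝ) (a : ℕ → ℕ) : Prop :=
  ∃ θ : ℕ → ℝ, θ 0 = α ∧
    ∀ n : ℕ, (a n : ℤ) = ⌊θ n⌋ ∧ θ (n + 1) = 1 / (θ n - (⌊θ n⌋ : ℝ))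

/-- `p n / q n` are the convergents of the continued fraction with partial quotients `a`:
`p₋₁ = 1, q₋₁ = 0, p₀ = a₀, q₀ = 1`, and
`pₙ = aₙ pₙ₋₁ + pₙ₋₂`, `qₙ = aₙ qₙ₋₁ + qₙ₋₂` for `n ≥ 1`. -/
def IsConvergents (a p q : ℕ → ℕ) : Prop :=
  p 0 = a 0 ∧ q 0 = 1 ∧ p 1 = a 1 * a 0 + 1 ∧ q 1 = a 1 ∧
  (∀ n : ℕ, p (n + 2) = a (n + 2) * p (n + 1) + p n) ∧
  (∀ n : ℕ, q (n + 2) = a (n + 2) * q (n + 1) + q n)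

/-- The solution of the continuant recurrence `u (n + 2) = a n * u (n + 1) + u n` with initial
values `u 0 = x` and `u 1 = y`. The convergents are started at index `-2`, which makes the
recurrence valid from the first partial quotient on: `pₙ = continuantSeq a 0 1 (n + 2)` and
`qₙ = continuantSeq a 1 0 (n + 2)`. -/
def continuantSeq {R : Type*} [Semiring R] (a : ℕ → R) (x y : R) : ℕ → R
  | 0 => x
  | 1 => y
  | n + 2 => a n * continuantSeq a x y (n + 1) + continuantSeq a x y n

section Semiring

variable {R : Type*} [Semiring R]

theorem continuantSeq_add (a : ℕ → R) (x y : R) (n k : ℕ) :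
    continuantSeq a x y (n + k) =
      continuantSeq (fun i ↦ a (i + k)) (continuantSeq a x y k)
        (continuantSeq a x y (k + 1)) n := by
  induction n using Nat.twoStepInduction with
  | zero => rw [zero_add, continuantSeq]
  | one => rw [add_comm, continuantSeq]
  | more n ih ih' =>
    rw [continuantSeq, ← ih, ← ih', add_right_comm n 2 k, add_right_comm n 1 k, continuantSeq]

theorem continuantSeq_succ (a : ℕ → R) (x y : R) (n : ℕ) :
    continuantSeq a x y (n + 1) = continuantSeq (fun i ↦ a (i + 1)) y (a 0 * y + x) n :=
  continuantSeq_add a x y n 1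

theorem continuantSeq_eq_mul_add_mul (a : ℕ → R) (x y : R) (n : ℕ) :
    continuantSeq a x y n = continuantSeq a 0 1 n * y + continuantSeq a 1 0 n * x := by
  induction n using Nat.twoStepInduction with
  | zero => simp [continuantSeq]
  | one => simp [continuantSeq]
  | more n ih ih' =>
    simp only [continuantSeq]
    rw [ih, ih']
    noncomm_ring

theorem continuantSeq_add_period {a : ℕ → R} {k : ℕ} (ha : Function.Periodic a k)
    (x y : R) (n : ℕ) :
    continuantSeq a x y (n + k) =
      continuantSeq a 0 1 n * continuantSeq a x y (k + 1) +
        continuantSeq a 1 0 n * continuantSeq a x y k := by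
  rw [continuantSeq_add, funext ha, continuantSeq_eq_mul_add_mul]

theorem continuantSeq_succ_pos [PartialOrder R] [IsStrictOrderedRing R] {a : ℕ → R}
    (ha : ∀ n, 0 < a n) {x y : R} (hx : 0 ≤ x) (hy : 0 < y) (n : ℕ) :
    0 < continuantSeq a x y (n + 1) := by
  induction n generalizing a x y with
  | zero => exact hy
  | succ n ih =>
    rw [continuantSeq_succ]
    exact ih (fun i ↦ ha (i + 1)) hy.le (add_pos_of_pos_of_nonneg (mul_pos (ha 0) hy) hx)

end Semiring

namespace IsConvergents

variable {a p q : ℕ → ℕ}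

theorem cast_num_eq (h : IsConvergents a p q) (R : Type*) [Semiring R] (n : ℕ) :
    (p n : R) = continuantSeq (fun i ↦ (a i : R)) 0 1 (n + 2) := by
  obtain ⟨hp0, -, hp1, -, hp, -⟩ := h
  induction n using Nat.twoStepInduction with
  | zero => simp [continuantSeq, hp0]
  | one => simp [continuantSeq, hp1]
  | more n ih ih' => rw [hp, continuantSeq, ← ih, ← ih', Nat.cast_add, Nat.cast_mul]

theorem cast_den_eq (h : IsConvergents a p q) (R : Type*) [Semiring R] (n : ℕ) :
    (q n : R) = continuantSeq (fun i ↦ (a i : R)) 1 0 (n + 2) := by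
  obtain ⟨-, hq0, -, hq1, -, hq⟩ := h
  induction n using Nat.twoStepInduction with
  | zero => simp [continuantSeq, hq0]
  | one => simp [continuantSeq, hq1]
  | more n ih ih' => rw [hq, continuantSeq, ← ih, ← ih', Nat.cast_add, Nat.cast_mul]

end IsConvergents

theorem irrational_of_eq_one_div_sub_floor {θ : ℕ → ℝ} (h0 : Irrational (θ 0))
    (h : ∀ n, θ (n + 1) = 1 / (θ n - ⌊θ n⌋)) (n : ℕ) : Irrational (θ n) := by
  induction n with
  | zero => exact h0
  | succ n ih =>
    rw [h, one_div]
    exact (ih.sub_intCast _).inv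

theorem floor_one_div_sub_floor_pos {K : Type*} [Field K] [LinearOrder K] [IsStrictOrderedRing K]
    [FloorRing K] {x : K} (hx : x ≠ ⌊x⌋) : 0 < ⌊1 / (x - ⌊x⌋)⌋ := by
  rw [Int.self_sub_floor, Int.floor_pos]
  exact one_le_one_div (Int.fract_pos.2 hx) (Int.fract_lt_one x).le

namespace IsCFExpansion

variable {α : ℝ} {a : ℕ → ℕ}

theorem succ_pos (h : IsCFExpansion α a) (hα : Irrational α) (n : ℕ) : 0 < a (n + 1) := by
  obtain ⟨θ, rfl, hθ⟩ := h
  have hirr : Irrational (θ n) := irrational_of_eq_one_div_sub_floor hα (fun i ↦ (hθ i).2) n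
  rw [← Int.natCast_pos, (hθ (n + 1)).1, (hθ n).2]
  exact floor_one_div_sub_floor_pos (hirr.ne_int _)

theorem pos_of_periodic (h : IsCFExpansion α a) (hα : Irrational α) {k : ℕ} (hk : 1 ≤ k)
    (ha : Function.Periodic a k) (n : ℕ) : 0 < a n := by
  obtain ⟨j, rfl⟩ := Nat.exists_eq_add_of_le' hk
  exact ha n ▸ h.succ_pos hα (n + j)

end IsCFExpansion

theorem convergents_p_q_rational_relation_general {K : Type*} [Field K] [LinearOrder K]
    [IsStrictOrderedRing K] {a : ℕ → K} (hpos : ∀ n, 0 < a n) {k : ℕ} (hk : 1 ≤ k)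
    (ha : Function.Periodic a k) :
    ∃ μ μ' ν ν' : K, ∀ n : ℕ,
      continuantSeq a 0 1 n = μ * continuantSeq a 1 0 n + μ' * continuantSeq a 1 0 (n + k) ∧
      continuantSeq a 1 0 n = ν * continuantSeq a 0 1 n + ν' * continuantSeq a 0 1 (n + k) := by
  have hp : continuantSeq a 0 1 k ≠ 0 := by
    obtain ⟨j, rfl⟩ := Nat.exists_eq_add_of_le' hk
    exact (continuantSeq_succ_pos hpos le_rfl one_pos j).ne'
  have hq : continuantSeq a 1 0 (k + 1) ≠ 0 := by
    obtain ⟨j, rfl⟩ := Nat.exists_eq_add_of_le' hk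
    rw [continuantSeq_succ]
    exact (continuantSeq_succ_pos (fun i ↦ hpos (i + 1)) le_rfl (by simp) j).ne'
  refine ⟨-continuantSeq a 1 0 k / continuantSeq a 1 0 (k + 1), 1 / continuantSeq a 1 0 (k + 1),
    -continuantSeq a 0 1 (k + 1) / continuantSeq a 0 1 k, 1 / continuantSeq a 0 1 k,
    fun n ↦ ⟨?_, ?_⟩⟩
  · rw [continuantSeq_add_period ha]
    field_simp
    ring
  · rw [continuantSeq_add_period ha]
    field_simp
    ring

/-- If the continued fraction of `α` is purely periodic with period `k`, then
there are rationals `μ, μ', ν, ν'` with `p_n = μ q_n + μ' q_{n+k}` and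
`q_n = ν p_n + ν' p_{n+k}` for all `n`. -/
theorem convergents_p_q_rational_relation
    (α : ℝ) (hα : 0 < α) (hirr : Irrational α)
    (a : ℕ → ℕ) (ha : IsCFExpansion α a)
    (p q : ℕ → ℕ) (hpq : IsConvergents a p q)
    (k : ℕ) (hk : 1 ≤ k) (hper : ∀ n : ℕ, a (n + k) = a n) :
    ∃ μ μ' ν ν' : ℚ, ∀ n : ℕ,
      (p n : ℚ) = μ * (q n : ℚ) + μ' * (q (n + k) : ℚ) ∧
      (q n : ℚ) = ν * (p n : ℚ) + ν' * (p (n + k) : ℚ) := by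
  obtain ⟨μ, μ', ν, ν', h⟩ := convergents_p_q_rational_relation_general
    (fun n ↦ Nat.cast_pos.2 (ha.pos_of_periodic hirr hk hper n)) hk
    (Function.Periodic.comp hper (Nat.cast : ℕ → ℚ))
  refine ⟨μ, μ', ν, ν', fun n ↦ ?_⟩
  simpa only [hpq.cast_num_eq ℚ, hpq.cast_den_eq ℚ, add_right_comm n k 2] using h (n + 2)
end

section
/- Let X, Y ∈ ℕ with X ≠ Y, and let n be the smallest index with [q_n](X) ≠ [q_n](Y). If n is even, then f_α(X) < f_α(Y) if and only if [q_n](X) < [q_n](Y); if n is odd, then f_α(X) < f_α(Y) if and only if [q_n](X) > [q_n](Y). -/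
/-- `d` is the sequence of Ostrowski digits of `X` in base the continued fraction
with partial quotients `a` and convergent denominators `q`: `d n` is the digit
`b_{n+1}` multiplying `q n`, the digits are eventually zero,
`X = Σ_{n} d n * q n`, `d 0 < a 1`, `d n ≤ a (n+1)` for `n ≥ 1`, and
`d n = 0` whenever `d (n+1) = a (n+2)`. -/
def IsOstrowskiRep (a q : ℕ → ℕ) (X : ℕ) (d : ℕ → ℕ) : Prop :=
  d 0 < a 1 ∧ (∀ n : ℕ, d (n + 1) ≤ a (n + 2)) ∧
  (∀ n : ℕ, d (n + 1) = a (n + 2) → d n = 0) ∧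
  ∃ N : ℕ, (∀ n : ℕ, N ≤ n → d n = 0) ∧ X = ∑ n ∈ Finset.range N, d n * q n

/-- The half-open interval `I_α = [−1/ζ_α, 1 − 1/ζ_α)` where `ζ_α = 1/(α − ⌊α⌋)`. -/
def Ialpha (α : ℝ) : Set ℝ :=
  Set.Ico (-(1 / (1 / (α - (⌊α⌋ : ℝ))))) (1 - 1 / (1 / (α - (⌊α⌋ : ℝ))))

/-- `f` is the function `f_α : ℕ → I_α` with `f_α X` the unique element of `I_α`
such that `α X − f_α X` is a (natural) integer. -/
def IsFracPart (α : ℝ) (f : ℕ → ℝ) : Prop :=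
  ∀ X : ℕ, f X ∈ Ialpha α ∧ ∃ U : ℕ, α * (X : ℝ) - f X = (U : ℝ)

open Filter Finset Set

/-- `E` is the sequence of remainders of a non-terminating Euclidean algorithm on `E 0` and `E 1`.
The quotients are `a 1, a 2, …`, indexed from `1` to match the partial quotients of a continued
fraction, whose integer part is `a 0`; zero quotients are allowed. -/
structure IsRemainderSeq {R : Type*} [Semiring R] [LT R] (a : ℕ → ℕ) (E : ℕ → R) : Prop where
  pos : ∀ n, 0 < E n
  eq_add : ∀ n, E n = a (n + 1) * E (n + 1) + E (n + 2)

/-- Ostrowski's conditions on a digit sequence, where `d n` is the digit `b_{n+1}` multiplying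
`q n`, except for the strict bound `d 0 < a 1` on the first digit. Unlike the strict bound, these
conditions are inherited by the digits from a given index on. -/
structure IsOstrowskiDigits (a d : ℕ → ℕ) : Prop where
  le : ∀ n, d n ≤ a (n + 1)
  eq_zero : ∀ n, d (n + 1) = a (n + 2) → d n = 0

/-- The `m` terms from index `n` on of the alternating sum of the `d k * E (k + 1)`, with the sign
normalised so that the term of index `n` is counted positively. -/
def altTail {R : Type*} [Ring R] (E : ℕ → R) (d : ℕ → ℕ) (m n : ℕ) : R :=
  ∑ k ∈ range m, (-1) ^ k * (d (n + k) * E (n + k + 1))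

/-- The distances `|q (n - 1) * α - p (n - 1)|` between `α` and its convergents, scaled by the
denominators. The index is shifted so that the value at `0` comes from `p₋₁ = 1`, `q₋₁ = 0`, and
the absolute value is expressed by the alternating sign. -/
def approxError (α : ℝ) (p q : ℕ → ℕ) : ℕ → ℝ
  | 0 => 1
  | n + 1 => (-1) ^ n * (q n * α - p n)

section AltTail

theorem altTail_zero {R : Type*} [Ring R] (E : ℕ → R) (d : ℕ → ℕ) (n : ℕ) :
    altTail E d 0 n = 0 :=
  sum_range_zero _

theorem altTail_succ {R : Type*} [Ring R] (E : ℕ → R) (d : ℕ → ℕ) (m n : ℕ) :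
    altTail E d (m + 1) n = d n * E (n + 1) - altTail E d m (n + 1) := by
  rw [altTail, altTail, sum_range_succ', add_comm, sub_eq_add_neg, ← sum_neg_distrib]
  congr 1
  · simp only [pow_zero, one_mul, add_zero]
  · refine sum_congr rfl fun k _ ↦ ?_
    rw [add_right_comm n 1 k, ← add_assoc n k 1, pow_succ', neg_one_mul, neg_mul]

variable {R : Type*} [CommRing R] [LinearOrder R] [IsStrictOrderedRing R]
  {a : ℕ → ℕ} {E : ℕ → R} {d e : ℕ → ℕ} {m n : ℕ}

theorem IsRemainderSeq.altTail_mem_Ioo (hE : IsRemainderSeq a E) (hd : ∀ n, d n ≤ a (n + 1))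
    (m n : ℕ) : altTail E d m n ∈ Ioo (-E (n + 1)) (E n) := by
  induction m generalizing n with
  | zero =>
    rw [altTail_zero]
    exact ⟨neg_neg_of_pos (hE.pos _), hE.pos _⟩
  | succ m ih =>
    obtain ⟨hlower, hupper⟩ := ih (n + 1)
    have hE_pos := hE.pos (n + 1)
    have hterm_nonneg : 0 ≤ (d n : R) * E (n + 1) := by positivity
    have hterm_le : (d n : R) * E (n + 1) ≤ a (n + 1) * E (n + 1) := by
      gcongr
      exact hd n
    rw [altTail_succ]
    constructor <;> linarith [hE.eq_add n]

theorem IsRemainderSeq.altTail_lt_sub (hE : IsRemainderSeq a E) (hd : ∀ n, d n ≤ a (n + 1))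
    (h : d n < a (n + 1)) (m : ℕ) : altTail E d m n < E n - E (n + 1) := by
  have hE_pos := hE.pos (n + 1)
  have hterm_nonneg : 0 ≤ (d n : R) * E (n + 1) := by positivity
  have hterm_le : ((d n : R) + 1) * E (n + 1) ≤ a (n + 1) * E (n + 1) := by
    gcongr
    exact_mod_cast h
  cases m with
  | zero =>
    rw [altTail_zero]
    linarith [hE.eq_add n, hE.pos (n + 2)]
  | succ m =>
    rw [altTail_succ]
    linarith [hE.eq_add n, (hE.altTail_mem_Ioo hd m (n + 1)).1]

theorem IsOstrowskiDigits.succ_lt (hd : IsOstrowskiDigits a d) (h : d n ≠ 0) :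
    d (n + 1) < a (n + 2) :=
  (hd.le (n + 1)).lt_of_ne (mt (hd.eq_zero n) h)

theorem IsRemainderSeq.altTail_lt_altTail (hE : IsRemainderSeq a E)
    (hd : ∀ n, d n ≤ a (n + 1)) (he : IsOstrowskiDigits a e) (h : d n < e n) (m : ℕ) :
    altTail E d (m + 1) n < altTail E e (m + 1) n := by
  have hlower : -E (n + 2) < altTail E d m (n + 1) := (hE.altTail_mem_Ioo hd m (n + 1)).1
  have hupper : altTail E e m (n + 1) < E (n + 1) - E (n + 2) :=
    hE.altTail_lt_sub he.le (he.succ_lt (Nat.ne_zero_of_lt h)) m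
  have hE_pos := hE.pos (n + 1)
  have hgap : ((d n : R) + 1) * E (n + 1) ≤ e n * E (n + 1) := by
    gcongr
    exact_mod_cast h
  rw [altTail_succ, altTail_succ]
  linarith

theorem IsRemainderSeq.altTail_lt_altTail_iff (hE : IsRemainderSeq a E)
    (hd : IsOstrowskiDigits a d) (he : IsOstrowskiDigits a e) (hne : d n ≠ e n) (m : ℕ) :
    altTail E d (m + 1) n < altTail E e (m + 1) n ↔ d n < e n := by
  refine ⟨fun h ↦ ?_, fun h ↦ hE.altTail_lt_altTail hd.le he h m⟩
  by_contra hlt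
  exact h.not_gt (hE.altTail_lt_altTail he.le hd (hne.lt_or_gt.resolve_left hlt) m)

theorem altTail_succ_lt_altTail_succ_iff (h : d n = e n) :
    altTail E d (m + 1) n < altTail E e (m + 1) n ↔
      altTail E e m (n + 1) < altTail E d m (n + 1) := by
  rw [altTail_succ, altTail_succ, h, sub_lt_sub_iff_left]

theorem IsRemainderSeq.altTail_lt_altTail_iff_of_first_ne (hE : IsRemainderSeq a E)
    (hd : IsOstrowskiDigits a d) (he : IsOstrowskiDigits a e) (m n j : ℕ)
    (hne : d (n + j) ≠ e (n + j)) (hagree : ∀ i < j, d (n + i) = e (n + i)) :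
    (Even j → (altTail E d (m + j + 1) n < altTail E e (m + j + 1) n ↔ d (n + j) < e (n + j))) ∧
    (Odd j → (altTail E d (m + j + 1) n < altTail E e (m + j + 1) n ↔ e (n + j) < d (n + j))) := by
  induction j generalizing d e n with
  | zero => simpa using hE.altTail_lt_altTail_iff hd he hne m
  | succ j ih =>
    have hagree_zero : d n = e n := hagree 0 j.succ_pos
    rw [← add_assoc m j 1, altTail_succ_lt_altTail_succ_iff hagree_zero, Nat.even_add_one,
      Nat.not_even_iff_odd, Nat.odd_add_one, Nat.not_odd_iff_even]
    rw [← add_assoc n j 1, add_right_comm n j 1] at hne ⊢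
    refine (ih he hd (n + 1) hne.symm fun i hi ↦ ?_).symm
    rw [add_right_comm n 1 i]
    exact (hagree (i + 1) (Nat.succ_lt_succ hi)).symm

end AltTail

section ApproxError

variable {α : ℝ} {a p q : ℕ → ℕ}

theorem IsCFExpansion.cast_zero_eq_floor (ha : IsCFExpansion α a) : (a 0 : ℝ) = ⌊α⌋ := by
  obtain ⟨θ, rfl, hθ⟩ := ha
  exact_mod_cast (hθ 0).1

theorem IsCFExpansion.exists_completeQuotients (ha : IsCFExpansion α a) (hirr : Irrational α) :
    ∃ θ : ℕ → ℝ, θ 0 = α ∧ (∀ n, 0 < θ (n + 1)) ∧ ∀ n, (θ n - a n) * θ (n + 1) = 1 := by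
  obtain ⟨θ, hθ_zero, hθ⟩ := ha
  have hθ_succ (n : ℕ) : θ (n + 1) = (Int.fract (θ n))⁻¹ := by
    rw [(hθ n).2, one_div, Int.self_sub_floor]
  have hθ_irr (n : ℕ) : Irrational (θ n) := by
    induction n with
    | zero => rwa [hθ_zero]
    | succ n ih =>
      rw [hθ_succ]
      exact (ih.sub_intCast _).inv
  have hfract_pos (n : ℕ) : 0 < Int.fract (θ n) :=
    Int.fract_pos.2 ((hθ_irr n).ne_int _)
  have hfract (n : ℕ) : θ n - a n = Int.fract (θ n) := by
    rw [← Int.self_sub_floor, ← (hθ n).1, Int.cast_natCast]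
  refine ⟨θ, hθ_zero, fun n ↦ ?_, fun n ↦ ?_⟩
  · rw [hθ_succ]
    exact inv_pos.2 (hfract_pos n)
  · rw [hfract, hθ_succ, mul_inv_cancel₀ (hfract_pos n).ne']

theorem IsConvergents.approxError_one (hpq : IsConvergents a p q) (α : ℝ) :
    approxError α p q 1 = α - a 0 := by
  simp only [approxError, hpq.1, hpq.2.1, pow_zero, Nat.cast_one, one_mul]

theorem IsConvergents.approxError_eq_add (hpq : IsConvergents a p q) (α : ℝ) (n : ℕ) :
    approxError α p q n =
      a (n + 1) * approxError α p q (n + 1) + approxError α p q (n + 2) := by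
  obtain ⟨hp_zero, hq_zero, hp_one, hq_one, hp, hq⟩ := hpq
  cases n with
  | zero =>
    simp only [approxError, hp_zero, hq_zero, hp_one, hq_one]
    push_cast
    ring
  | succ n =>
    simp only [approxError, hp, hq]
    push_cast
    ring

theorem IsCFExpansion.approxError_pos (ha : IsCFExpansion α a) (hirr : Irrational α)
    (hpq : IsConvergents a p q) (n : ℕ) : 0 < approxError α p q n := by
  obtain ⟨θ, hθ_zero, hθ_pos, hθ⟩ := ha.exists_completeQuotients hirr
  have hmul (n : ℕ) : θ (n + 1) * approxError α p q (n + 1) = approxError α p q n := by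
    induction n with
    | zero => rw [zero_add, hpq.approxError_one, ← hθ_zero, mul_comm, hθ 0, approxError]
    | succ n ih =>
      linear_combination approxError α p q (n + 1) * hθ (n + 1) -
        θ (n + 2) * (ih + hpq.approxError_eq_add α n)
  induction n with
  | zero => exact one_pos
  | succ n ih => exact (pos_iff_pos_of_mul_pos ((hmul n).symm ▸ ih)).1 (hθ_pos n)

theorem IsCFExpansion.isRemainderSeq_approxError (ha : IsCFExpansion α a) (hirr : Irrational α)
    (hpq : IsConvergents a p q) : IsRemainderSeq a (approxError α p q) :=
  ⟨ha.approxError_pos hirr hpq, hpq.approxError_eq_add α⟩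

theorem altTail_approxError (α : ℝ) (p q d : ℕ → ℕ) (m : ℕ) :
    altTail (approxError α p q) d m 0 =
      α * ∑ k ∈ range m, (d k : ℝ) * q k - ∑ k ∈ range m, (d k : ℝ) * p k := by
  rw [altTail, mul_sum, ← sum_sub_distrib]
  refine sum_congr rfl fun k _ ↦ ?_
  have hsign : (-1 : ℝ) ^ k * (-1) ^ k = 1 := by rw [← mul_pow, neg_one_mul, neg_neg, one_pow]
  rw [zero_add, approxError]
  linear_combination (d k : ℝ) * (q k * α - p k) * hsign

end ApproxError

section FracPart

variable {α : ℝ} {a p q d : ℕ → ℕ} {X : ℕ} {f : ℕ → ℝ}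

theorem Ialpha_eq_Ico (α : ℝ) : Ialpha α = Ico (-Int.fract α) (-Int.fract α + 1) := by
  rw [Ialpha, one_div_one_div, Int.self_sub_floor, neg_add_eq_sub]

theorem IsFracPart.eq_of_mem_Ialpha (hf : IsFracPart α f) {y : ℝ} (hy : y ∈ Ialpha α) {k : ℤ}
    (hk : α * X - y = k) : f X = y := by
  obtain ⟨hfX, l, hl⟩ := hf X
  rw [Ialpha_eq_Ico] at hfX hy
  rw [← (toIcoMod_eq_iff one_pos).2 ⟨hy, k, by rw [zsmul_one, ← hk, add_sub_cancel]⟩]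
  refine ((toIcoMod_eq_iff one_pos).2 ⟨hfX, l, ?_⟩).symm
  rw [zsmul_one, Int.cast_natCast, ← hl, add_sub_cancel]

theorem IsOstrowskiRep.isOstrowskiDigits (hd : IsOstrowskiRep a q X d) :
    IsOstrowskiDigits a d where
  le
    | 0 => hd.1.le
    | n + 1 => hd.2.1 n
  eq_zero := hd.2.2.1

theorem IsOstrowskiRep.eventually_sum_eq (hd : IsOstrowskiRep a q X d) :
    ∀ᶠ m in atTop, ∑ k ∈ range m, d k * q k = X := by
  obtain ⟨-, -, -, N, hN, hX⟩ := hd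
  filter_upwards [eventually_ge_atTop N] with m hm
  rw [hX, eventually_constant_sum (fun k hk ↦ by rw [hN k hk, zero_mul]) hm]

theorem IsCFExpansion.altTail_mem_Ialpha (ha : IsCFExpansion α a) (hirr : Irrational α)
    (hpq : IsConvergents a p q) (hd : ∀ n, d n ≤ a (n + 1)) (hd_zero : d 0 < a 1) (m : ℕ) :
    altTail (approxError α p q) d m 0 ∈ Ialpha α := by
  have hE := ha.isRemainderSeq_approxError hirr hpq
  have hE_one : approxError α p q 1 = Int.fract α := by
    rw [hpq.approxError_one, ha.cast_zero_eq_floor, Int.self_sub_floor]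
  have hlower := (hE.altTail_mem_Ioo hd m 0).1
  have hupper := hE.altTail_lt_sub hd hd_zero m
  rw [zero_add, hE_one] at hlower hupper
  rw [Ialpha_eq_Ico, neg_add_eq_sub]
  exact ⟨hlower.le, hupper⟩

theorem IsFracPart.eventually_eq_altTail (hf : IsFracPart α f) (ha : IsCFExpansion α a)
    (hirr : Irrational α) (hpq : IsConvergents a p q) (hd : IsOstrowskiRep a q X d) :
    ∀ᶠ m in atTop, f X = altTail (approxError α p q) d m 0 := by
  filter_upwards [hd.eventually_sum_eq] with m hm
  have hmem := ha.altTail_mem_Ialpha hirr hpq hd.isOstrowskiDigits.le hd.1 m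
  refine hf.eq_of_mem_Ialpha hmem (k := ∑ k ∈ range m, (d k : ℤ) * p k) ?_
  rw [altTail_approxError, ← hm]
  push_cast
  ring

end FracPart

/-- Comparison of `f_α` values is determined by the least significant differing
Ostrowski digit: if `n` is the smallest index at which the digits of `X` and `Y`
differ, then for even `n`, `f_α X < f_α Y ↔ [q_n](X) < [q_n](Y)`, and for odd
`n`, `f_α X < f_α Y ↔ [q_n](X) > [q_n](Y)`. -/
theorem fracPart_lt_iff_lsd
    (α : ℝ) (hα : 0 < α) (hirr : Irrational α)
    (a : ℕ → ℕ) (ha : IsCFExpansion α a)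
    (p q : ℕ → ℕ) (hpq : IsConvergents a p q)
    (ost : ℕ → ℕ → ℕ) (host : ∀ X : ℕ, IsOstrowskiRep a q X (ost X))
    (fα : ℕ → ℝ) (hf : IsFracPart α fα)
    (X Y n : ℕ) (hXY : X ≠ Y)
    (hdiff : ost X n ≠ ost Y n)
    (hmin : ∀ m : ℕ, m < n → ost X m = ost Y m) :
    (Even n → (fα X < fα Y ↔ ost X n < ost Y n)) ∧
    (Odd n → (fα X < fα Y ↔ ost Y n < ost X n)) := by
  have hE := ha.isRemainderSeq_approxError hirr hpq
  obtain ⟨m, hm⟩ := eventually_atTop.1 ((hf.eventually_eq_altTail ha hirr hpq (host X)).and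
    (hf.eventually_eq_altTail ha hirr hpq (host Y)))
  obtain ⟨hfX, hfY⟩ := hm (m + n + 1) (by lia)
  have hlex := hE.altTail_lt_altTail_iff_of_first_ne (host X).isOstrowskiDigits
    (host Y).isOstrowskiDigits m 0 n
  rw [← hfX, ← hfY] at hlex
  simp only [zero_add] at hlex
  exact hlex hdiff hmin
end

section
/- Let X ∈ ℕ. Then there exist an open interval I containing f_α(X) and an index m ∈ ℕ with [q_n](X) = 0 for all n > m, such that every Y ∈ ℕ with f_α(Y) ∈ I satisfies [q_n](Y) = [q_n](X) for all n ≤ m (i.e., the Ostrowski representation of Y restricted to the digits of q_0, …, q_m equals X). -/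
/-!
The errors `c n = |α q_n - p_n|` of the convergents turn the Ostrowski representation
`X = ∑ n, d n * q n` into the alternating expansion `f_α X = ∑ n, (-1) ^ n * d n * c n`. The
Ostrowski conditions confine the remainder `r (k + 1) = d k * c k - r k` of this expansion to the
open interval `(-c (k + 1), c k)`, and to `(-c (k + 1), c k - c (k + 1))` if `d k > 0`. Hence
`d k = ⌈(r k - c (k + 1)) / c k⌉₊`, so the digits are recovered from `f_α X = r 0` by a greedy
algorithm. The bounds being strict, the argument of the ceiling is never a natural number, so at
each step the ceiling is locally constant and `r (k + 1)` depends continuously on `f_α X`.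
-/

open Filter Topology

theorem continuousAt_natCeil_of_lt_ceil {R : Type*} [Semiring R] [LinearOrder R]
    [FloorSemiring R] [TopologicalSpace R] [OrderTopology R] {y : R} (hy : y < ⌈y⌉₊) :
    ContinuousAt (Nat.ceil : R → ℕ) y := by
  rw [ContinuousAt, nhds_discrete ℕ, tendsto_pure]
  have hle : ∀ᶠ z in 𝓝 y, ⌈z⌉₊ ≤ ⌈y⌉₊ :=
    (eventually_lt_nhds hy).mono fun z hz => Nat.ceil_le.2 hz.le
  have hge : ∀ᶠ z in 𝓝 y, ⌈y⌉₊ ≤ ⌈z⌉₊ := by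
    rcases Nat.eq_zero_or_eq_succ_pred ⌈y⌉₊ with hzero | hsucc
    · simp [hzero]
    · rw [hsucc]
      exact (eventually_gt_nhds (Nat.lt_ceil.1 (by omega))).mono fun z hz => Nat.lt_ceil.2 hz
  filter_upwards [hle, hge] with z h₁ h₂ using le_antisymm h₁ h₂

theorem eq_of_mem_Ico_of_sub_eq_intCast {K : Type*} [Ring K] [LinearOrder K]
    [IsStrictOrderedRing K] {b x y : K} (hx : x ∈ Set.Ico b (b + 1))
    (hy : y ∈ Set.Ico b (b + 1)) {z : ℤ} (hz : x - y = z) : x = y := by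
  have hlt : |(z : K)| < 1 := by
    rw [← hz, abs_sub_lt_iff]
    exact ⟨sub_lt_iff_lt_add'.2 (hx.2.trans_le (add_le_add_left hy.1 1)),
      sub_lt_iff_lt_add'.2 (hy.2.trans_le (add_le_add_left hx.1 1))⟩
  have hzero : z = 0 := Int.abs_lt_one_iff.1 (by exact_mod_cast hlt)
  rwa [hzero, Int.cast_zero, sub_eq_zero] at hz

theorem Ialpha_eq_Ico_fract (α : ℝ) :
    Ialpha α = Set.Ico (-Int.fract α) (-Int.fract α + 1) := by
  rw [Ialpha, one_div_one_div, Int.self_sub_floor, neg_add_eq_sub]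

theorem irrational_of_succ_eq_inv_fract {θ : ℕ → ℝ} (hirr : Irrational (θ 0))
    (hθ : ∀ n, θ (n + 1) = (Int.fract (θ n))⁻¹) (n : ℕ) : Irrational (θ n) := by
  induction n with
  | zero => exact hirr
  | succ n ih => exact hθ n ▸ (ih.sub_intCast _).inv

/-- The absolute error `|α q_n - p_n|` of the `n`-th convergent of `α`, written with the sign
`(-1) ^ n` instead of an absolute value so that its recurrence is a polynomial identity. -/
def convergentError (α : ℝ) (p q : ℕ → ℕ) (n : ℕ) : ℝ :=
  (-1) ^ n * (α * q n - p n)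

/-- The properties of the errors `c n = |α q_n - p_n|` on which the theory of Ostrowski digits
rests; the total `1` plays the role of `c (-1)`. -/
structure IsErrorScale (a : ℕ → ℕ) (c : ℕ → ℝ) : Prop where
  pos (n : ℕ) : 0 < c n
  total : a 1 * c 0 + c 1 = 1
  recurrence (n : ℕ) : a (n + 2) * c (n + 1) + c (n + 2) = c n

namespace IsConvergents

variable {a p q : ℕ → ℕ} (hpq : IsConvergents a p q)
include hpq

theorem convergentError_zero (α : ℝ) : convergentError α p q 0 = α - a 0 := by
  simp [convergentError, hpq.1, hpq.2.1]

theorem convergentError_total (α : ℝ) :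
    a 1 * convergentError α p q 0 + convergentError α p q 1 = 1 := by
  obtain ⟨hp0, hq0, hp1, hq1, -, -⟩ := hpq
  simp only [convergentError, hp0, hq0, hp1, hq1]
  push_cast
  ring

theorem convergentError_recurrence (α : ℝ) (n : ℕ) :
    a (n + 2) * convergentError α p q (n + 1) + convergentError α p q (n + 2) =
      convergentError α p q n := by
  obtain ⟨-, -, -, -, hp, hq⟩ := hpq
  simp only [convergentError, hp, hq]
  push_cast
  ring

theorem convergentError_succ {θ : ℕ → ℝ} (ha : ∀ n, (a n : ℝ) = ⌊θ n⌋)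
    (hfract : ∀ n, Int.fract (θ n) ≠ 0) (hθ : ∀ n, θ (n + 1) = (Int.fract (θ n))⁻¹) (n : ℕ) :
    convergentError (θ 0) p q (n + 1) =
      convergentError (θ 0) p q n * Int.fract (θ (n + 1)) := by
  have hmul (k : ℕ) : Int.fract (θ k) * θ (k + 1) = 1 := by
    rw [hθ, mul_inv_cancel₀ (hfract k)]
  induction n with
  | zero =>
    have htotal := hpq.convergentError_total (θ 0)
    have hzero : convergentError (θ 0) p q 0 * θ 1 = 1 := by
      rw [hpq.convergentError_zero, ha, Int.self_sub_floor, hmul]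
    rw [zero_add, ← Int.self_sub_floor, ← ha]
    linear_combination htotal - hzero
  | succ n ih =>
    have hprev : convergentError (θ 0) p q (n + 1) * θ (n + 2) =
        convergentError (θ 0) p q n := by
      rw [ih, mul_assoc, hmul, mul_one]
    rw [← Int.self_sub_floor, ← ha]
    linear_combination hpq.convergentError_recurrence (θ 0) n - hprev

theorem isErrorScale {α : ℝ} (hirr : Irrational α) (ha : IsCFExpansion α a) :
    IsErrorScale a (convergentError α p q) := by
  obtain ⟨θ, rfl, hθ⟩ := ha
  have hfloor (n : ℕ) : (a n : ℝ) = ⌊θ n⌋ := by exact_mod_cast (hθ n).1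
  have hinv (n : ℕ) : θ (n + 1) = (Int.fract (θ n))⁻¹ := (hθ n).2.trans (one_div _)
  have hfract (n : ℕ) : 0 < Int.fract (θ n) :=
    Int.fract_pos.2 ((irrational_of_succ_eq_inv_fract hirr hinv n).ne_int _)
  refine ⟨fun n => ?_, hpq.convergentError_total _, hpq.convergentError_recurrence _⟩
  induction n with
  | zero => rw [hpq.convergentError_zero, hfloor]; exact hfract 0
  | succ n ih =>
    rw [hpq.convergentError_succ hfloor (fun k => (hfract k).ne') hinv]
    exact mul_pos ih (hfract _)

end IsConvergents

/-- What is left of `x` after subtracting the first `k` terms of `∑ n, (-1) ^ n * d n * c n`,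
multiplied by `(-1) ^ k` (see `remainder_eq`). -/
def remainder (c : ℕ → ℝ) (d : ℕ → ℕ) (x : ℝ) : ℕ → ℝ
  | 0 => x
  | k + 1 => d k * c k - remainder c d x k

theorem remainder_eq (c : ℕ → ℝ) (d : ℕ → ℕ) (x : ℝ) (k : ℕ) :
    remainder c d x k = (-1) ^ k * (x - ∑ n ∈ Finset.range k, (-1) ^ n * (d n * c n)) := by
  induction k with
  | zero => simp [remainder]
  | succ k ih =>
    have hsq : ((-1 : ℝ) ^ k) * (-1) ^ k = 1 := by simp [← mul_pow]
    rw [remainder, ih, Finset.sum_range_succ]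
    linear_combination -(d k * c k) * hsq

theorem remainder_sum_eq_zero (c : ℕ → ℝ) {d : ℕ → ℕ} {N : ℕ} (hN : ∀ n, N ≤ n → d n = 0)
    {k : ℕ} (hk : N ≤ k) :
    remainder c d (∑ n ∈ Finset.range N, (-1) ^ n * (d n * c n)) k = 0 := by
  rw [remainder_eq, Finset.eventually_constant_sum (fun n hn => by simp [hN n hn]) hk, sub_self,
    mul_zero]

theorem sum_digit_mul_convergentError (α : ℝ) (p q d : ℕ → ℕ) (N : ℕ) :
    ∑ n ∈ Finset.range N, (-1) ^ n * (d n * convergentError α p q n) =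
      α * (∑ n ∈ Finset.range N, d n * q n : ℕ) - (∑ n ∈ Finset.range N, d n * p n : ℕ) := by
  push_cast
  rw [Finset.mul_sum, ← Finset.sum_sub_distrib]
  refine Finset.sum_congr rfl fun n _ => ?_
  have hsq : ((-1 : ℝ) ^ n) * (-1) ^ n = 1 := by simp [← mul_pow]
  rw [convergentError]
  linear_combination d n * (α * q n - p n) * hsq

/-- `x` is the finite alternating sum `∑ n, (-1) ^ n * d n * c n` with digits `d` satisfying the
Ostrowski conditions other than `d 0 < a 1`. Finiteness and the value of the sum are both
expressed by the vanishing of the remainders. -/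
structure IsAlternatingExpansion (a : ℕ → ℕ) (c : ℕ → ℝ) (x : ℝ) (d : ℕ → ℕ) : Prop where
  digit_le (n : ℕ) : d (n + 1) ≤ a (n + 2)
  digit_eq_zero (n : ℕ) : d (n + 1) = a (n + 2) → d n = 0
  remainder_eq_zero : ∀ᶠ k in atTop, remainder c d x k = 0

namespace IsAlternatingExpansion

variable {a : ℕ → ℕ} {c : ℕ → ℝ} {x : ℝ} {d : ℕ → ℕ}

theorem remainder_succ_mem_Ioo (h : IsAlternatingExpansion a c x d) (hc : IsErrorScale a c)
    (k : ℕ) : remainder c d x (k + 1) ∈ Set.Ioo (-c (k + 1)) (c k) := by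
  obtain ⟨N, hN⟩ := eventually_atTop.1 h.remainder_eq_zero
  induction k using Nat.strong_decreasing_induction with
  | base =>
    refine ⟨N, fun k hk => ?_⟩
    rw [hN (k + 1) (by omega)]
    exact ⟨neg_neg_of_pos (hc.pos _), hc.pos _⟩
  | step k ih =>
    have hnonneg : 0 ≤ d (k + 1) * c (k + 1) := mul_nonneg (Nat.cast_nonneg _) (hc.pos _).le
    have hle : d (k + 1) * c (k + 1) ≤ a (k + 2) * c (k + 1) :=
      mul_le_mul_of_nonneg_right (Nat.cast_le.2 (h.digit_le k)) (hc.pos _).le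
    obtain ⟨hlower, hupper⟩ := ih (k + 1) k.lt_succ_self
    rw [remainder] at hlower hupper
    exact ⟨by linarith, by linarith [hc.recurrence k]⟩

theorem remainder_succ_lt_of_pos (h : IsAlternatingExpansion a c x d) (hc : IsErrorScale a c)
    {k : ℕ} (hk : 0 < d k) : remainder c d x (k + 1) < c k - c (k + 1) := by
  have hlt : d (k + 1) < a (k + 2) :=
    (h.digit_le k).lt_of_ne fun heq => hk.ne' (h.digit_eq_zero k heq)
  have hle : ((d (k + 1) : ℝ) + 1) * c (k + 1) ≤ a (k + 2) * c (k + 1) :=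
    mul_le_mul_of_nonneg_right (by exact_mod_cast hlt) (hc.pos _).le
  have hnext := (h.remainder_succ_mem_Ioo hc (k + 1)).1
  rw [remainder] at hnext
  linarith [hc.recurrence k]

theorem mem_Ioo_of_head_lt (h : IsAlternatingExpansion a c x d) (hc : IsErrorScale a c)
    (hd : d 0 < a 1) : x ∈ Set.Ioo (-c 0) (-c 0 + 1) := by
  have hnonneg : 0 ≤ d 0 * c 0 := mul_nonneg (Nat.cast_nonneg _) (hc.pos _).le
  have hle : ((d 0 : ℝ) + 1) * c 0 ≤ a 1 * c 0 :=
    mul_le_mul_of_nonneg_right (by exact_mod_cast hd) (hc.pos _).le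
  obtain ⟨hlower, hupper⟩ := h.remainder_succ_mem_Ioo hc 0
  simp only [remainder] at hlower hupper
  exact ⟨by linarith, by linarith [hc.total]⟩

theorem lt_digit (h : IsAlternatingExpansion a c x d) (hc : IsErrorScale a c) (k : ℕ) :
    (remainder c d x k - c (k + 1)) / c k < d k := by
  have hlower := (h.remainder_succ_mem_Ioo hc k).1
  rw [remainder] at hlower
  rw [div_lt_iff₀ (hc.pos k)]
  linarith

theorem ceil_eq_digit (h : IsAlternatingExpansion a c x d) (hc : IsErrorScale a c) (k : ℕ) :
    ⌈(remainder c d x k - c (k + 1)) / c k⌉₊ = d k := by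
  have hlt := h.lt_digit hc k
  rcases Nat.eq_zero_or_pos (d k) with hzero | hpos
  · rw [hzero, Nat.cast_zero] at hlt
    rw [hzero, Nat.ceil_eq_zero]
    exact hlt.le
  · have hupper := h.remainder_succ_lt_of_pos hc hpos
    rw [remainder] at hupper
    refine (Nat.ceil_eq_iff hpos.ne').2 ⟨?_, hlt.le⟩
    rw [Nat.cast_pred hpos, lt_div_iff₀ (hc.pos k)]
    linarith

theorem eventually_digit_eq {ι : Type*} {l : Filter ι} {y : ι → ℝ} {e : ι → ℕ → ℕ}
    (h : IsAlternatingExpansion a c x d) (hc : IsErrorScale a c)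
    (he : ∀ i, IsAlternatingExpansion a c (y i) (e i)) (hy : Tendsto y l (𝓝 x)) (k : ℕ) :
    ∀ᶠ i in l, e i k = d k := by
  have hdigit (j : ℕ)
      (hj : Tendsto (fun i => remainder c (e i) (y i) j) l (𝓝 (remainder c d x j))) :
      ∀ᶠ i in l, e i j = d j := by
    have hceil := continuousAt_natCeil_of_lt_ceil
      ((h.lt_digit hc j).trans_eq (congrArg _ (h.ceil_eq_digit hc j).symm))
    have htendsto := hceil.tendsto.comp ((hj.sub_const (c (j + 1))).div_const (c j))
    simpa only [Function.comp_def, (he _).ceil_eq_digit hc, h.ceil_eq_digit hc,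
      nhds_discrete, tendsto_pure] using htendsto
  have hremainder (j : ℕ) :
      Tendsto (fun i => remainder c (e i) (y i) j) l (𝓝 (remainder c d x j)) := by
    induction j with
    | zero => exact hy
    | succ j ih =>
      refine (ih.const_sub (d j * c j)).congr' ?_
      filter_upwards [hdigit j ih] with i hi
      rw [remainder, hi]
  exact hdigit k (hremainder k)

end IsAlternatingExpansion

namespace IsOstrowskiRep

variable {a q : ℕ → ℕ} {X : ℕ} {d : ℕ → ℕ}

theorem exists_isAlternatingExpansion (hd : IsOstrowskiRep a q X d) (α : ℝ) (p : ℕ → ℕ) :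
    ∃ V : ℕ, IsAlternatingExpansion a (convergentError α p q) (α * X - V) d := by
  obtain ⟨-, hle, hzero, N, hN, rfl⟩ := hd
  refine ⟨∑ n ∈ Finset.range N, d n * p n, hle, hzero, eventually_atTop.2 ⟨N, fun k hk => ?_⟩⟩
  rw [← sum_digit_mul_convergentError]
  exact remainder_sum_eq_zero _ hN hk

theorem isAlternatingExpansion_of_mem_Ialpha {p : ℕ → ℕ} {α x : ℝ}
    (hd : IsOstrowskiRep a q X d) (hpq : IsConvergents a p q)
    (hc : IsErrorScale a (convergentError α p q)) (hfloor : a 0 = ⌊α⌋)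
    (hx : x ∈ Ialpha α) {U : ℤ} (hU : α * X - x = U) :
    IsAlternatingExpansion a (convergentError α p q) x d := by
  obtain ⟨V, hV⟩ := hd.exists_isAlternatingExpansion α p
  have hzero : convergentError α p q 0 = Int.fract α := by
    rw [hpq.convergentError_zero, ← Int.self_sub_floor, ← hfloor, Int.cast_natCast]
  have hmem := Set.Ioo_subset_Ico_self (hV.mem_Ioo_of_head_lt hc hd.1)
  rw [hzero] at hmem
  rw [Ialpha_eq_Ico_fract] at hx
  have hdiff : x - (α * X - V) = ((V - U : ℤ) : ℝ) := by
    push_cast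
    linear_combination -hU
  rwa [eq_of_mem_Ico_of_sub_eq_intCast hx hmem hdiff]

end IsOstrowskiRep

/-- Around every value `f_α X` there is an open interval `I` and an index `m`
(with all digits of `X` above `m` zero) such that every `Y` with `f_α Y ∈ I`
has the same Ostrowski digits as `X` up to index `m`. -/
theorem fracPart_locally_determines_prefix
    (α : ℝ) (hα : 0 < α) (hirr : Irrational α)
    (a : ℕ → ℕ) (ha : IsCFExpansion α a)
    (p q : ℕ → ℕ) (hpq : IsConvergents a p q)
    (ost : ℕ → ℕ → ℕ) (host : ∀ X : ℕ, IsOstrowskiRep a q X (ost X))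
    (fα : ℕ → ℝ) (hf : IsFracPart α fα)
    (X : ℕ) :
    ∃ lo hi : ℝ, ∃ m : ℕ,
      lo < fα X ∧ fα X < hi ∧
      (∀ n : ℕ, m < n → ost X n = 0) ∧
      ∀ Y : ℕ, fα Y ∈ Set.Ioo lo hi → ∀ n : ℕ, n ≤ m → ost Y n = ost X n := by
  have hc := hpq.isErrorScale hirr ha
  have hfloor : a 0 = ⌊α⌋ := by
    obtain ⟨θ, rfl, hθ⟩ := ha
    exact (hθ 0).1
  have hexp (Y : ℕ) : IsAlternatingExpansion a (convergentError α p q) (fα Y) (ost Y) := by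
    obtain ⟨hmem, U, hU⟩ := hf Y
    exact (host Y).isAlternatingExpansion_of_mem_Ialpha hpq hc hfloor hmem (U := U) hU
  obtain ⟨-, -, -, m, hm, -⟩ := host X
  have hdigits : ∀ᶠ Y in comap fα (𝓝 (fα X)), ∀ n ∈ Set.Iic m, ost Y n = ost X n :=
    (Set.finite_Iic m).eventually_all.2 fun n _ =>
      (hexp X).eventually_digit_eq hc hexp tendsto_comap n
  obtain ⟨lo, hi, hX, hsub⟩ := mem_nhds_iff_exists_Ioo_subset.1 (eventually_comap.1 hdigits)
  exact ⟨lo, hi, m, hX.1, hX.2, fun n hn => hm n hn.le, fun Y hY => hsub hY Y rfl⟩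
end

section
/- Let X ∈ ℕ and n ∈ ℕ. Then [q_n](X) = 0 if and only if there exist Z1, Z2 ∈ ℕ with X = Z1 + Z2 such that [q_m](Z1) = 0 for all m ≥ n and [q_m](Z2) = 0 for all m ≤ n. -/
section OstrowskiDigits

open Filter

variable {a p q d e : ℕ → ℕ} {X Y n : ℕ}

/-- The digit conditions of the Ostrowski numeration system with partial quotients `a`, separated
from `IsOstrowskiRep`: no finiteness of the support, and no number represented by `d`. -/
structure IsOstrowskiAdmissible (a d : ℕ → ℕ) : Prop where
  zero_lt : d 0 < a 1
  succ_le (n : ℕ) : d (n + 1) ≤ a (n + 2)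
  eq_zero_of_succ_eq (n : ℕ) : d (n + 1) = a (n + 2) → d n = 0

namespace IsOstrowskiAdmissible

theorem mono (hd : IsOstrowskiAdmissible a d) (hed : e ≤ d) : IsOstrowskiAdmissible a e where
  zero_lt := (hed 0).trans_lt hd.zero_lt
  succ_le k := (hed (k + 1)).trans (hd.succ_le k)
  eq_zero_of_succ_eq k hk := by
    have hdk : d (k + 1) = a (k + 2) := (hd.succ_le k).antisymm (hk ▸ hed (k + 1))
    exact Nat.eq_zero_of_le_zero (hd.eq_zero_of_succ_eq k hdk ▸ hed k)

theorem add (hd : IsOstrowskiAdmissible a d) (he : IsOstrowskiAdmissible a e)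
    (hdn : ∀ m, n ≤ m → d m = 0) (hen : ∀ m, m ≤ n → e m = 0) :
    IsOstrowskiAdmissible a (d + e) where
  zero_lt := by simpa [hen 0 n.zero_le] using hd.zero_lt
  succ_le k := by
    rcases le_total n (k + 1) with hk | hk
    · simpa [hdn _ hk] using he.succ_le k
    · simpa [hen _ hk] using hd.succ_le k
  eq_zero_of_succ_eq k := by
    rcases Nat.lt_or_ge k n with hk | hk
    · simpa [hen _ hk, hen _ hk.le] using hd.eq_zero_of_succ_eq k
    · simpa [hdn _ hk, hdn _ (Nat.le_succ_of_le hk)] using he.eq_zero_of_succ_eq k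

theorem sum_range_lt (hd : IsOstrowskiAdmissible a d) (hpq : IsConvergents a p q) (N : ℕ) :
    ∑ i ∈ Finset.range N, d i * q i < q N := by
  obtain ⟨-, hq0, -, hq1, -, hq⟩ := hpq
  induction N using Nat.twoStepInduction with
  | zero => simp [hq0]
  | one => simpa [hq0, hq1] using hd.zero_lt
  | more N ih ih' =>
    rw [Finset.sum_range_succ, hq]
    rcases (hd.succ_le N).eq_or_lt with hmax | hlt
    · have hsum : ∑ i ∈ Finset.range (N + 1), d i * q i = ∑ i ∈ Finset.range N, d i * q i := by
        rw [Finset.sum_range_succ, hd.eq_zero_of_succ_eq N hmax, zero_mul, add_zero]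
      rw [hsum, hmax, add_comm]
      gcongr
    · calc
        ∑ i ∈ Finset.range (N + 1), d i * q i + d (N + 1) * q (N + 1)
          < q (N + 1) + d (N + 1) * q (N + 1) := by gcongr
        _ = (d (N + 1) + 1) * q (N + 1) := by ring
        _ ≤ a (N + 2) * q (N + 1) := Nat.mul_le_mul_right _ hlt
        _ ≤ a (N + 2) * q (N + 1) + q N := Nat.le_add_right _ _

end IsOstrowskiAdmissible

theorem eq_of_sum_range_mul_eq (hd : ∀ N, ∑ i ∈ Finset.range N, d i * q i < q N)
    (he : ∀ N, ∑ i ∈ Finset.range N, e i * q i < q N) {N : ℕ}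
    (hsum : ∑ i ∈ Finset.range N, d i * q i = ∑ i ∈ Finset.range N, e i * q i) :
    ∀ i < N, d i = e i := by
  induction N with
  | zero => simp
  | succ N ih =>
    have hqN : 0 < q N := Nat.zero_lt_of_lt (hd N)
    rw [Finset.sum_range_succ, Finset.sum_range_succ] at hsum
    have hquot : d N = e N := by
      simpa [Nat.add_mul_div_right _ _ hqN, Nat.div_eq_of_lt (hd N), Nat.div_eq_of_lt (he N)]
        using congrArg (· / q N) hsum
    have hrem : ∑ i ∈ Finset.range N, d i * q i = ∑ i ∈ Finset.range N, e i * q i := by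
      simpa [Nat.mod_eq_of_lt (hd N), Nat.mod_eq_of_lt (he N)] using congrArg (· % q N) hsum
    exact Nat.forall_lt_succ_right.2 ⟨ih hrem, hquot⟩

theorem isOstrowskiRep_iff_eventually :
    IsOstrowskiRep a q X d ↔ IsOstrowskiAdmissible a d ∧ (∀ᶠ n in atTop, d n = 0) ∧
      ∀ᶠ N in atTop, X = ∑ i ∈ Finset.range N, d i * q i := by
  constructor
  · rintro ⟨hzero, hle, hmax, N, hN, rfl⟩
    refine ⟨⟨hzero, hle, hmax⟩, eventually_atTop.2 ⟨N, hN⟩, eventually_atTop.2 ⟨N, fun M hM => ?_⟩⟩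
    exact (Finset.eventually_constant_sum (fun i hi => by rw [hN i hi, zero_mul]) hM).symm
  · rintro ⟨hd, hzero, hsum⟩
    obtain ⟨N, hN⟩ := eventually_atTop.1 (hzero.and hsum)
    exact ⟨hd.zero_lt, hd.succ_le, hd.eq_zero_of_succ_eq, N, fun i hi => (hN i hi).1,
      (hN N le_rfl).2⟩

namespace IsOstrowskiRep

theorem admissible (hd : IsOstrowskiRep a q X d) : IsOstrowskiAdmissible a d :=
  (isOstrowskiRep_iff_eventually.1 hd).1

theorem eventually_eq_sum (hd : IsOstrowskiRep a q X d) :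
    ∀ᶠ N in atTop, X = ∑ i ∈ Finset.range N, d i * q i :=
  (isOstrowskiRep_iff_eventually.1 hd).2.2

theorem value_unique (hX : IsOstrowskiRep a q X d) (hY : IsOstrowskiRep a q Y d) : X = Y := by
  obtain ⟨N, hXN, hYN⟩ := (hX.eventually_eq_sum.and hY.eventually_eq_sum).exists
  exact hXN.trans hYN.symm

theorem digits_unique (hpq : IsConvergents a p q) (hd : IsOstrowskiRep a q X d)
    (he : IsOstrowskiRep a q X e) : d = e := by
  funext i
  obtain ⟨N, ⟨hdN, heN⟩, hiN⟩ :=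
    ((hd.eventually_eq_sum.and he.eventually_eq_sum).and (eventually_gt_atTop i)).exists
  exact eq_of_sum_range_mul_eq (hd.admissible.sum_range_lt hpq) (he.admissible.sum_range_lt hpq)
    (hdN.symm.trans heN) i hiN

theorem exists_of_le (hd : IsOstrowskiRep a q X d) (hed : e ≤ d) :
    ∃ Z, IsOstrowskiRep a q Z e := by
  have ⟨_, _, _, N, hN, _⟩ := hd
  have he := hd.admissible.mono hed
  exact ⟨_, he.zero_lt, he.succ_le, he.eq_zero_of_succ_eq, N,
    fun i hi => Nat.eq_zero_of_le_zero (hN i hi ▸ hed i), rfl⟩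

theorem add (hd : IsOstrowskiRep a q X d) (he : IsOstrowskiRep a q Y e)
    (hde : IsOstrowskiAdmissible a (d + e)) : IsOstrowskiRep a q (X + Y) (d + e) := by
  obtain ⟨-, hdzero, hdsum⟩ := isOstrowskiRep_iff_eventually.1 hd
  obtain ⟨-, hezero, hesum⟩ := isOstrowskiRep_iff_eventually.1 he
  refine isOstrowskiRep_iff_eventually.2 ⟨hde, ?_, ?_⟩
  · filter_upwards [hdzero, hezero] with i hdi hei
    rw [Pi.add_apply, hdi, hei]
  · filter_upwards [hdsum, hesum] with N hX hY
    simp only [Pi.add_apply, add_mul, Finset.sum_add_distrib, ← hX, ← hY]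

theorem exists_split (hd : IsOstrowskiRep a q X d) (hn : d n = 0) :
    ∃ Z₁ Z₂, X = Z₁ + Z₂ ∧
      IsOstrowskiRep a q Z₁ ((Set.Iio n).indicator d) ∧
      IsOstrowskiRep a q Z₂ ((Set.Ioi n).indicator d) := by
  obtain ⟨Z₁, hZ₁⟩ := hd.exists_of_le (Set.indicator_le_self (Set.Iio n) d)
  obtain ⟨Z₂, hZ₂⟩ := hd.exists_of_le (Set.indicator_le_self (Set.Ioi n) d)
  have hsplit : (Set.Iio n).indicator d + (Set.Ioi n).indicator d = d := by
    funext i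
    rcases lt_trichotomy i n with hi | rfl | hi
    · simp [hi, hi.le]
    · simp [hn]
    · simp [hi, hi.le]
  have hsum := hZ₁.add hZ₂ (hsplit.symm ▸ hd.admissible)
  rw [hsplit] at hsum
  exact ⟨Z₁, Z₂, hd.value_unique hsum, hZ₁, hZ₂⟩

end IsOstrowskiRep

end OstrowskiDigits

/-- For an arbitrary `a`, for instance one that is eventually zero, some numbers may have no
representation, so the digit sequences of `Z₁` and `Z₂` are quantified along with them. -/
theorem ostrowski_digit_zero_iff_split_general {a p q d : ℕ → ℕ} {X : ℕ}
    (hpq : IsConvergents a p q) (hd : IsOstrowskiRep a q X d) (n : ℕ) :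
    d n = 0 ↔
      ∃ Z₁ Z₂ : ℕ, X = Z₁ + Z₂ ∧
        (∃ d₁, IsOstrowskiRep a q Z₁ d₁ ∧ ∀ m, n ≤ m → d₁ m = 0) ∧
        (∃ d₂, IsOstrowskiRep a q Z₂ d₂ ∧ ∀ m, m ≤ n → d₂ m = 0) := by
  constructor
  · intro hn
    obtain ⟨Z₁, Z₂, hX, hZ₁, hZ₂⟩ := hd.exists_split hn
    exact ⟨Z₁, Z₂, hX,
      ⟨_, hZ₁, fun m hm => Set.indicator_of_notMem (Set.notMem_Iio.2 hm) d⟩,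
      ⟨_, hZ₂, fun m hm => Set.indicator_of_notMem (Set.notMem_Ioi.2 hm) d⟩⟩
  · rintro ⟨Z₁, Z₂, rfl, ⟨d₁, hd₁, hzero₁⟩, ⟨d₂, hd₂, hzero₂⟩⟩
    have hsum := hd₁.add hd₂ (hd₁.admissible.add hd₂.admissible hzero₁ hzero₂)
    rw [hd.digits_unique hpq hsum, Pi.add_apply, hzero₁ n le_rfl, hzero₂ n le_rfl]

/-- `[q_n](X) = 0` iff `X = Z1 + Z2` for some `Z1, Z2` with all Ostrowski digits
of `Z1` at indices `≥ n` zero and all Ostrowski digits of `Z2` at indices `≤ n`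
zero. -/
theorem ostrowski_digit_zero_iff_split
    (α : ℝ) (hα : 0 < α) (hirr : Irrational α)
    (a : ℕ → ℕ) (ha : IsCFExpansion α a)
    (p q : ℕ → ℕ) (hpq : IsConvergents a p q)
    (ost : ℕ → ℕ → ℕ) (host : ∀ X : ℕ, IsOstrowskiRep a q X (ost X))
    (X n : ℕ) :
    ost X n = 0 ↔
      ∃ Z1 Z2 : ℕ, X = Z1 + Z2 ∧
        (∀ m : ℕ, n ≤ m → ost Z1 m = 0) ∧
        (∀ m : ℕ, m ≤ n → ost Z2 m = 0) := by
  have hrep (Z : ℕ) (d : ℕ → ℕ) : IsOstrowskiRep a q Z d ↔ d = ost Z :=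
    ⟨fun hd => hd.digits_unique hpq (host Z), fun hd => hd ▸ host Z⟩
  simpa only [hrep, exists_eq_left] using
    ostrowski_digit_zero_iff_split_general hpq (host X) n
end
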